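/- arXiv:2106.11372 — 2 statements merged into one kernel-verified Lean document; each statement's English description precedes it below -/
import Mathlib

section
/- Let X be a metric space, F ⊆ X a finite set of facilities, Fᵗ ⊆ F nonempty, C a finite set of clients with positions p : C → X satisfying p(j) ∈ Fᵗ for every j ∈ C, and L ∈ ℕ. Suppose σ¹ : C → F satisfies |σ¹⁻¹(i)| ≥ L for every i in the image of σ¹. Then there exists σ² : C → Fᵗ such that |σ²⁻¹(i')| ≥ L for every i' in the image of σ², and Σ_{j∈C} dist(p(j), σ²(j)) ≤ 2·Σ_{j∈C} dist(p(j), σ¹(j)). -/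
open Finset

/-!
Replace each facility `x` by a client position `r x` nearest to `x`. Merging facilities along `r`
only enlarges loads. If a client at `y` is served by `x`, then `y` is itself a candidate for `r x`,
so `dist x (r x) ≤ dist x y` and the detour through `x` at most doubles that client's cost.
-/

section Merging

variable {C X Y : Type*} [Fintype C] [DecidableEq X] [DecidableEq Y]

theorem card_filter_eq_le_card_filter_comp_eq (r : X → Y) (σ : C → X) (x : X) :
    #{j | σ j = x} ≤ #{j | r (σ j) = r x} :=
  card_le_card <| monotone_filter_right univ fun _ _ hj => congrArg r hj

theorem le_card_filter_comp_eq {L : ℕ} {σ : C → X}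
    (hσ : ∀ x, (∃ j, σ j = x) → L ≤ #{j | σ j = x}) (r : X → Y) (y : Y)
    (hy : ∃ j, r (σ j) = y) : L ≤ #{j | r (σ j) = y} := by
  obtain ⟨j, rfl⟩ := hy
  exact (hσ (σ j) ⟨j, rfl⟩).trans (card_filter_eq_le_card_filter_comp_eq r σ (σ j))

end Merging

section NearestPoint

variable {X : Type*} [PseudoMetricSpace X] {s : Set X}

theorem dist_le_two_mul_dist_of_isMinOn {x y z : X} (hz : IsMinOn (dist x) s z) (hy : y ∈ s) :
    dist y z ≤ 2 * dist y x :=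
  calc
    dist y z ≤ dist y x + dist x z := dist_triangle y x z
    _ ≤ dist y x + dist x y := by gcongr; exact hz hy
    _ = 2 * dist y x := by rw [dist_comm x y, two_mul]

theorem sum_dist_comp_le_two_mul_sum_dist {C : Type*} {t : Finset C} {p σ : C → X} {r : X → X}
    (hr : ∀ x, IsMinOn (dist x) s (r x)) (hp : ∀ j ∈ t, p j ∈ s) :
    ∑ j ∈ t, dist (p j) (r (σ j)) ≤ 2 * ∑ j ∈ t, dist (p j) (σ j) := by
  rw [mul_sum]
  exact sum_le_sum fun j hj => dist_le_two_mul_dist_of_isMinOn (hr (σ j)) (hp j hj)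

theorem exists_mem_forall_isMinOn_dist (hs : s.Finite) (hne : s.Nonempty) :
    ∃ r : X → X, ∀ x, r x ∈ s ∧ IsMinOn (dist x) s (r x) :=
  Classical.skolem.mp fun x => s.exists_min_image (dist x) hs hne

end NearestPoint

theorem instance_I2_reduction_general {X C : Type*} [PseudoMetricSpace X] [DecidableEq X]
    [Fintype C] (p : C → X) {L : ℕ} {σ1 : C → X}
    (hlb1 : ∀ i, (∃ j, σ1 j = i) → L ≤ #{j | σ1 j = i}) :
    ∃ σ2 : C → X, (∀ j, σ2 j ∈ Set.range p) ∧
      (∀ i, (∃ j, σ2 j = i) → L ≤ #{j | σ2 j = i}) ∧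
      ∑ j, dist (p j) (σ2 j) ≤ 2 * ∑ j, dist (p j) (σ1 j) := by
  cases isEmpty_or_nonempty C with
  | inl _ => exact ⟨p, by simp⟩
  | inr _ =>
    obtain ⟨r, hr⟩ := exists_mem_forall_isMinOn_dist (Set.finite_range p) (Set.range_nonempty p)
    exact ⟨fun j => r (σ1 j), fun j => (hr (σ1 j)).1, le_card_filter_comp_eq hlb1 r,
      sum_dist_comp_le_two_mul_sum_dist (fun x => (hr x).2) fun j _ => Set.mem_range_self j⟩

/-- Reduction from `I₁` to the lower-bounded instance `I₂`: restricting the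
facility set to the nonempty subset `Fᵗ` (with all clients located at points of `Fᵗ`) at most
doubles the connection cost, while preserving the lower bound `L` on the loads. -/
theorem instance_I2_reduction
    (X : Type) [MetricSpace X] [DecidableEq X]
    (F Ft : Finset X) (hFt : Ft ⊆ F) (hFtne : Ft.Nonempty)
    (C : Type) [Fintype C] (p : C → X) (hp : ∀ j : C, p j ∈ Ft)
    (L : ℕ)
    (σ1 : C → X) (hσ1 : ∀ j : C, σ1 j ∈ F)
    (hlb1 : ∀ i : X, (∃ j : C, σ1 j = i) →
      L ≤ (univ.filter (fun j : C => σ1 j = i)).card) :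
    ∃ σ2 : C → X, (∀ j : C, σ2 j ∈ Ft) ∧
      (∀ i : X, (∃ j : C, σ2 j = i) →
        L ≤ (univ.filter (fun j : C => σ2 j = i)).card) ∧
      (∑ j : C, dist (p j) (σ2 j)) ≤ 2 * ∑ j : C, dist (p j) (σ1 j) := by
  obtain ⟨σ2, hσ2, hlb2, hcost⟩ := instance_I2_reduction_general p hlb1
  exact ⟨σ2, fun j => Set.range_subset_iff.mpr hp (hσ2 j), hlb2, hcost⟩
end

section
/- Let T be a finite set, n : T → ℕ, L, U ∈ ℕ with L ≤ U, and β ≥ 1 a real with n i ≤ β·U for every i ∈ T. Define d i = max(L − n i, 0) and u i = max(L, n i) for i ∈ T. Let ρ : T × T → ℝ with ρ(i', i) ≥ 0 for all i', i, satisfying: Σ_{i∈T} ρ(i', i) = d i' for every i' ∈ T; Σ_{i'∈T} ρ(i', i) ≤ u i for every i ∈ T; and for every i ∈ T, if Σ_{i'∈T} ρ(i', i) > 0 then ρ(i, i) = d i. Define ρ¹ : T × T → ℝ by ρ¹(i, i') = ρ(i', i) for i ≠ i' and ρ¹(i', i') = n i'. Then: (i) Σ_{i' ∈ T, i' ≠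 i} ρ¹(i, i') ≤ n i for every i ∈ T; and (ii) Σ_{i∈T} ρ¹(i, i') ≤ max(L, n i') ≤ β·U for every i' ∈ T. -/
open Finset

/-! By `max L (n i) = n i + d i`, a facility `i` that serves anything spends `d i` of its capacity
on its own demand and keeps at most `n i` for the others. Likewise location `i'` receives its own
`n i'` clients and at most `d i'` from elsewhere, which together make `max L (n i')`. -/

section Type1Reassignment

variable {T M : Type*} [DecidableEq T]

/-- The type-1 reassignment `ρ¹` induced by a demand assignment `ρ`: the amount of clients located
at `i` that end up at `i'`. All `n i'` clients of `i'` are counted at `i'`, including those that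
other locations' demands attract away; off the diagonal `ρ¹` is the transpose of `ρ`, because
serving demand of `i'` at `i` means moving clients from `i` to `i'`. -/
def type1Reassignment (n : T → M) (ρ : T → T → M) (i i' : T) : M :=
  if i = i' then n i' else ρ i' i

theorem sum_filter_ne_type1Reassignment [Fintype T] [AddCommMonoid M]
    (n : T → M) (ρ : T → T → M) (i : T) :
    ∑ i' with i' ≠ i, type1Reassignment n ρ i i' = ∑ i' ∈ univ.erase i, ρ i' i := by
  rw [filter_ne']
  exact sum_congr rfl fun i' hi' ↦ if_neg (ne_of_mem_erase hi').symm

theorem sum_type1Reassignment [Fintype T] [AddCommMonoid M]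
    (n : T → M) (ρ : T → T → M) (i' : T) :
    ∑ i, type1Reassignment n ρ i i' = n i' + ∑ i ∈ univ.erase i', ρ i' i := by
  rw [← add_sum_erase univ _ (mem_univ i')]
  exact congrArg₂ _ (if_pos rfl) (sum_congr rfl fun i hi ↦ if_neg (ne_of_mem_erase hi))

variable [AddCommGroup M] [LinearOrder M] [IsOrderedAddMonoid M]

theorem max_eq_add_max_sub_zero (a b : M) : max a b = b + max (a - b) 0 := by
  rw [← max_add_add_left, add_sub_cancel, add_zero]

theorem sum_erase_le_of_sum_le_add {s : Finset T} {f : T → M} {i : T} {c d : M} (hi : i ∈ s)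
    (hc : 0 ≤ c) (hfi : 0 ≤ f i) (hsum : ∑ j ∈ s, f j ≤ c + d)
    (hself : 0 < ∑ j ∈ s, f j → d ≤ f i) : ∑ j ∈ s.erase i, f j ≤ c := by
  rw [sum_erase_eq_sub hi, sub_le_iff_le_add]
  rcases lt_or_ge 0 (∑ j ∈ s, f j) with hpos | hnonpos
  · exact hsum.trans (add_le_add_right (hself hpos) c)
  · exact hnonpos.trans (add_nonneg hc hfi)

variable [Fintype T] {n : T → M} {L : M} {ρ : T → T → M}

theorem sum_filter_ne_type1Reassignment_le {i : T} (hn : 0 ≤ n i) (hρ : 0 ≤ ρ i i)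
    (hcap : ∑ i', ρ i' i ≤ max L (n i))
    (hself : 0 < ∑ i', ρ i' i → max (L - n i) 0 ≤ ρ i i) :
    ∑ i' with i' ≠ i, type1Reassignment n ρ i i' ≤ n i := by
  rw [sum_filter_ne_type1Reassignment]
  rw [max_eq_add_max_sub_zero] at hcap
  exact sum_erase_le_of_sum_le_add (mem_univ i) hn hρ hcap hself

theorem sum_type1Reassignment_le {i' : T} (hρ : 0 ≤ ρ i' i')
    (hdem : ∑ i, ρ i' i ≤ max (L - n i') 0) :
    ∑ i, type1Reassignment n ρ i i' ≤ max L (n i') := by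
  rw [sum_type1Reassignment, max_eq_add_max_sub_zero, sum_erase_eq_sub (mem_univ i')]
  exact add_le_add_right ((sub_le_self _ hρ).trans hdem) (n i')

end Type1Reassignment

theorem natCast_tsub_eq_max {R : Type*} [Ring R] [LinearOrder R] [IsOrderedRing R]
    (a b : ℕ) : ((a - b : ℕ) : R) = max ((a : R) - b) 0 := by
  rcases le_total b a with h | h
  · rw [Nat.cast_sub h, max_eq_left (sub_nonneg.2 (Nat.mono_cast h))]
  · rw [Nat.sub_eq_zero_of_le h, Nat.cast_zero, max_eq_right (sub_nonpos.2 (Nat.mono_cast h))]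

theorem le_mul_of_one_le_of_mul_nonneg {R : Type*} [MulZeroOneClass R] [LinearOrder R]
    [MulPosMono R] {a b : R} (ha : 1 ≤ a) (hab : 0 ≤ a * b) : b ≤ a * b := by
  rcases le_total 0 b with hb | hb
  · exact le_mul_of_one_le_left hb ha
  · exact hb.trans hab

theorem type1_reassignment_bounds_general {T R : Type*} [Fintype T] [DecidableEq T]
    [Ring R] [LinearOrder R] [IsOrderedRing R]
    {n : T → R} {L U β : R} (hn0 : ∀ i, 0 ≤ n i) (hLU : L ≤ U) (hβ : 1 ≤ β)
    (hn : ∀ i, n i ≤ β * U)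
    {ρ : T → T → R} (hρ : ∀ i, 0 ≤ ρ i i)
    (hdem : ∀ i', ∑ i, ρ i' i ≤ max (L - n i') 0)
    (hcap : ∀ i, ∑ i', ρ i' i ≤ max L (n i))
    (hself : ∀ i, 0 < ∑ i', ρ i' i → max (L - n i) 0 ≤ ρ i i) :
    (∀ i, ∑ i' with i' ≠ i, type1Reassignment n ρ i i' ≤ n i) ∧
    ∀ i', ∑ i, type1Reassignment n ρ i i' ≤ max L (n i') ∧ max L (n i') ≤ β * U :=
  ⟨fun i ↦ sum_filter_ne_type1Reassignment_le (hn0 i) (hρ i) (hcap i) (hself i),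
    fun i' ↦ ⟨sum_type1Reassignment_le (hρ i') (hdem i'),
      max_le (hLU.trans (le_mul_of_one_le_of_mul_nonneg hβ ((hn0 i').trans (hn i')))) (hn i')⟩⟩

/-- Type-1 reassignments: given the demands `d i = max(L - n i, 0)` and
capacities `u i = max(L, n i)` of the capacitated instance `I_cap` and a feasible demand
assignment `ρ` in which every facility serving anything serves its own demand fully, the
induced client reassignment `ρ¹` sends out at most `n i` clients from each location `i` and
assigns at most `max(L, n i') ≤ β·U` clients to each location `i'`. -/
theorem type1_reassignment_bounds
    (T : Type) [Fintype T] [DecidableEq T]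
    (n : T → ℕ) (L U : ℕ) (hLU : L ≤ U)
    (β : ℝ) (hβ : 1 ≤ β) (hn : ∀ i : T, (n i : ℝ) ≤ β * U)
    (ρ : T → T → ℝ) (hρ0 : ∀ i' i : T, 0 ≤ ρ i' i)
    (hdem : ∀ i' : T, (∑ i, ρ i' i) = ((L - n i' : ℕ) : ℝ))
    (hcap : ∀ i : T, (∑ i', ρ i' i) ≤ ((max L (n i) : ℕ) : ℝ))
    (hself : ∀ i : T, 0 < (∑ i', ρ i' i) → ρ i i = ((L - n i : ℕ) : ℝ)) :
    (∀ i : T,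
      (∑ i' ∈ univ.filter (fun i' => i' ≠ i),
        (if i = i' then (n i' : ℝ) else ρ i' i)) ≤ (n i : ℝ)) ∧
    (∀ i' : T,
      (∑ i, (if i = i' then (n i' : ℝ) else ρ i' i)) ≤ ((max L (n i') : ℕ) : ℝ) ∧
      ((max L (n i') : ℕ) : ℝ) ≤ β * U) := by
  simp only [natCast_tsub_eq_max, Nat.cast_max] at hdem hcap hself ⊢
  exact type1_reassignment_bounds_general (fun i ↦ (n i).cast_nonneg) (Nat.cast_le.2 hLU)
    hβ hn (fun i ↦ hρ0 i i) (fun i' ↦ (hdem i').le) hcap (fun i hi ↦ (hself i hi).ge)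
end
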